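/- arXiv:2501.06065 — 13 statements merged into one kernel-verified Lean document; each statement's English description precedes it below -/
import Mathlib

section
/- Let x : ℕ → ℝ be defined by x₀ = 1/2 and x_k = 3x_{k-1}(1 - x_{k-1}) for k ≥ 1. Then for every k ≥ 0 one has x_{2k} < x_{2k+2} < 2/3 < x_{2k+3} < x_{2k+1}; in particular the even-indexed subsequence is strictly increasing and bounded above by 2/3, the odd-indexed subsequence is strictly decreasing and bounded below by 2/3, and the full sequence x_k converges to 2/3. -/
open Filter Topology

theorem stmt_1 (x : ℕ → ℝ) (h0 : x 0 = 1/2)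
    (hrec : ∀ k, x (k + 1) = 3 * x k * (1 - x k)) :
    (∀ k, x (2*k) < x (2*k+2) ∧ x (2*k+2) < 2/3 ∧ 2/3 < x (2*k+3) ∧
      x (2*k+3) < x (2*k+1)) ∧
    StrictMono (fun k => x (2*k)) ∧ (∀ k, x (2*k) < 2/3) ∧
    StrictAnti (fun k => x (2*k+1)) ∧ (∀ k, 2/3 < x (2*k+1)) ∧
    Tendsto x atTop (𝓝 (2/3)) := by
  have h2 : ∀ k, x (k+2) - x k = - 9 * (x k - 2/3)^3 * (3 * x k) := by
    intro k
    rw [hrec (k+1), hrec k]; ring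
  -- from the left of the fixed point to the right
  have hA : ∀ k, 1/2 ≤ x k → x k < 2/3 → 2/3 < x (k+1) ∧ x (k+1) ≤ 3/4 := by
    intro k h1 h3
    rw [hrec k]
    constructor
    · nlinarith [mul_pos (sub_pos.2 h3) (show (0:ℝ) < x k - 1/3 by linarith)]
    · nlinarith [sq_nonneg (x k - 1/2)]
  have hB : ∀ k, 2/3 < x k → x k ≤ 3/4 → 1/2 ≤ x (k+1) ∧ x (k+1) < 2/3 := by
    intro k h1 h3
    rw [hrec k]
    constructor
    · nlinarith [mul_nonneg (sub_nonneg.2 h1.le) (sub_nonneg.2 h3)]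
    · nlinarith [mul_pos (sub_pos.2 h1) (show (0:ℝ) < x k - 1/3 by linarith)]
  have hE : ∀ k, 1/2 ≤ x (2*k) ∧ x (2*k) < 2/3 := by
    intro k
    induction k with
    | zero => simp only [Nat.mul_zero, h0]; norm_num
    | succ k ih =>
      obtain ⟨a, b⟩ := hA _ ih.1 ih.2
      exact hB (2*k+1) a b
  have hO : ∀ k, 2/3 < x (2*k+1) ∧ x (2*k+1) ≤ 3/4 := fun k => hA _ (hE k).1 (hE k).2
  have hEi : ∀ k, x (2*k) < x (2*k+2) := by
    intro k
    have h := h2 (2*k)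
    obtain ⟨a, b⟩ := hE k
    have : 0 < (2/3 - x (2*k))^3 * (3 * x (2*k)) :=
      mul_pos (pow_pos (by linarith) 3) (by linarith)
    nlinarith
  have hOd : ∀ k, x (2*k+3) < x (2*k+1) := by
    intro k
    have h := h2 (2*k+1)
    obtain ⟨a, b⟩ := hO k
    have : 0 < (x (2*k+1) - 2/3)^3 * (3 * x (2*k+1)) :=
      mul_pos (pow_pos (by linarith) 3) (by linarith)
    have e : x (2*k+1+2) = x (2*k+3) := rfl
    rw [e] at h
    nlinarith
  have hmono : StrictMono (fun k => x (2*k)) := strictMono_nat_of_lt_succ hEi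
  refine ⟨fun k => ⟨hEi k, (hE (k+1)).2, (hO (k+1)).1, hOd k⟩, hmono, fun k => (hE k).2,
    strictAnti_nat_of_succ_lt hOd, fun k => (hO k).1, ?_⟩
  have hbdd : BddAbove (Set.range (fun k => x (2*k))) :=
    ⟨2/3, by rintro _ ⟨k, rfl⟩; exact (hE k).2.le⟩
  obtain ⟨l, hl⟩ : ∃ l, Tendsto (fun k => x (2*k)) atTop (𝓝 l) :=
    ⟨_, tendsto_atTop_ciSup hmono.monotone hbdd⟩
  have hl1 : 1/2 ≤ l := ge_of_tendsto' hl fun k => (hE k).1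
  have hs : Tendsto (fun k => x (2*k+2)) atTop (𝓝 l) := hl.comp (tendsto_add_atTop_nat 1)
  have hd : Tendsto (fun k => x (2*k+2) - x (2*k)) atTop (𝓝 (l - l)) := hs.sub hl
  have hd2 : Tendsto (fun k => x (2*k+2) - x (2*k)) atTop
      (𝓝 (- 9 * (l - 2/3)^3 * (3 * l))) := by
    simp only [h2]
    exact (((hl.sub_const _).pow 3).const_mul _).mul (hl.const_mul _)
  have heq := tendsto_nhds_unique hd hd2
  have hl2 : l = 2/3 := by
    have h3 : (l - 2/3)^3 * l = 0 := by linarith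
    rcases mul_eq_zero.1 h3 with h | h
    · have := pow_eq_zero_iff (n := 3) (by norm_num) |>.1 h
      linarith
    · linarith
  subst hl2
  have ho : Tendsto (fun k => x (2*k+1)) atTop (𝓝 (2/3)) := by
    simp only [hrec]
    have := (hl.const_mul 3).mul (hl.const_sub 1)
    convert this using 2
    norm_num
  rw [Metric.tendsto_atTop] at hl ho ⊢
  intro ε hε
  obtain ⟨N, hN⟩ := hl ε hε
  obtain ⟨M, hM⟩ := ho ε hε
  refine ⟨2 * (N + M), fun n hn => ?_⟩
  rcases Nat.even_or_odd' n with ⟨c, rfl | rfl⟩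
  · exact hN c (by omega)
  · exact hM c (by omega)
end

section
/- Let x : ℕ → ℝ be defined by x₀ = 1/2 and x_k = 3x_{k-1}(1 - x_{k-1}) for k ≥ 1. Then lim_{k→∞} k^{1/2}·(x_{2k+1} - 2/3) = 1/6 and lim_{k→∞} k^{1/2}·(2/3 - x_{2k}) = 1/6. -/
open Filter Topology

theorem stmt_2 (x : ℕ → ℝ) (h0 : x 0 = 1/2)
    (hrec : ∀ k, x (k + 1) = 3 * x k * (1 - x k)) :
    Tendsto (fun k : ℕ => (k : ℝ)^((1:ℝ)/2) * (x (2*k+1) - 2/3)) atTop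
      (𝓝 (1/6)) ∧
    Tendsto (fun k : ℕ => (k : ℝ)^((1:ℝ)/2) * (2/3 - x (2*k))) atTop
      (𝓝 (1/6)) := by
  obtain ⟨z, hz⟩ : ∃ z : ℕ → ℝ, ∀ k, z k = 2/3 - x (2*k) := ⟨_, fun _ => rfl⟩
  have hodd : ∀ k, x (2*k+1) - 2/3 = z k * (1 - 3 * z k) := by
    intro k
    rw [hrec, hz]; ring
  have hz0 : z 0 = 1/6 := by rw [hz]; norm_num [h0]
  have hstep : ∀ k, z (k+1) = z k * (1 - 18 * z k ^ 2 + 27 * z k ^ 3) := by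
    intro k
    rw [hz, hz, show 2*(k+1) = 2*k+1+1 by ring, hrec, hrec]; ring
  have hg : ∀ t : ℝ, 0 < t → t ≤ 1/6 → 0 < 1 - 18 * t ^ 2 + 27 * t ^ 3 ∧
      1 - 18 * t ^ 2 + 27 * t ^ 3 ≤ 1 := by
    intro t h1 h2
    have h3 : 0 < t^3 := by positivity
    have h4 : 0 < t^2 := by positivity
    constructor
    · nlinarith
    · nlinarith
  have hb : ∀ k, 0 < z k ∧ z k ≤ 1/6 := by
    intro k
    induction k with
    | zero => rw [hz0]; norm_num
    | succ k ih =>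
      obtain ⟨a, b⟩ := hg _ ih.1 ih.2
      rw [hstep]
      exact ⟨mul_pos ih.1 a, by nlinarith [ih.1, ih.2]⟩
  have hanti : Antitone z := by
    apply antitone_nat_of_succ_le
    intro k
    rw [hstep]
    nlinarith [(hb k).1, (hg _ (hb k).1 (hb k).2).2]
  have hlim : Tendsto z atTop (𝓝 0) := by
    have hL := tendsto_atTop_ciInf hanti ⟨0, by rintro _ ⟨k, rfl⟩; exact (hb k).1.le⟩
    set L := ⨅ i, z i
    have hL0 : 0 ≤ L := ge_of_tendsto' hL fun k => (hb k).1.le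
    have hL1 : L ≤ 1/6 := le_of_tendsto' hL fun k => (hb k).2
    have h1 : Tendsto (fun k => z (k+1)) atTop (𝓝 L) := hL.comp (tendsto_add_atTop_nat 1)
    have h2 : Tendsto (fun k => z (k+1)) atTop (𝓝 (L * (1 - 18 * L ^ 2 + 27 * L ^ 3))) := by
      simp_rw [hstep]
      have hc : Continuous fun t : ℝ => t * (1 - 18 * t ^ 2 + 27 * t ^ 3) := by fun_prop
      exact (hc.tendsto L).comp hL
    have h3 := tendsto_nhds_unique h1 h2
    have h4 : L^3 * (18 - 27 * L) = 0 := by linarith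
    have h5 : L = 0 := by
      rcases mul_eq_zero.1 h4 with h | h
      · exact pow_eq_zero_iff (by norm_num) |>.1 h
      · linarith
    rwa [h5] at hL
  have hdiff : Tendsto (fun k => 1 / z (k+1) ^ 2 - 1 / z k ^ 2) atTop (𝓝 36) := by
    have hc : ContinuousAt (fun t : ℝ => (18 - 27 * t) * (2 - 18 * t ^ 2 + 27 * t ^ 3) /
        (1 - 18 * t ^ 2 + 27 * t ^ 3) ^ 2) 0 := by
      apply ContinuousAt.div (by fun_prop) (by fun_prop)
      norm_num
    have h := hc.tendsto.comp hlim
    norm_num at h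
    refine h.congr fun k => ?_
    have h1 := (hb k).1.ne'
    have h2 := (hg _ (hb k).1 (hb k).2).1.ne'
    rw [hstep]
    simp only [Function.comp]
    generalize hG : 1 - 18 * z k ^ 2 + 27 * z k ^ 3 = G at *
    field_simp
    subst hG
    ring
  have hces := hdiff.cesaro
  simp_rw [Finset.sum_range_sub (fun k => 1 / z k ^ 2)] at hces
  have hinv : Tendsto (fun k : ℕ => (k:ℝ)⁻¹ * (1 / z k ^ 2)) atTop (𝓝 36) := by
    have h := hces.add ((tendsto_inv_atTop_nhds_zero_nat (𝕜 := ℝ)).mul_const (1 / z 0 ^ 2))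
    simp only [zero_mul, add_zero] at h
    refine h.congr fun k => ?_
    ring
  have hmain : Tendsto (fun k : ℕ => (k : ℝ)^((1:ℝ)/2) * z k) atTop (𝓝 (1/6)) := by
    have h := (Real.continuous_sqrt.tendsto _).comp (hinv.inv₀ (by norm_num))
    have e : √((36:ℝ)⁻¹) = 1/6 := by
      rw [show (36:ℝ)⁻¹ = (1/6)^2 by norm_num, Real.sqrt_sq (by norm_num)]
    rw [e] at h
    refine h.congr fun k => ?_
    simp only [Function.comp]
    rw [← Real.sqrt_eq_rpow, mul_inv, inv_inv, one_div, inv_inv,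
      Real.sqrt_mul (Nat.cast_nonneg k), Real.sqrt_sq (hb k).1.le]
  refine ⟨?_, ?_⟩
  · have h := hmain.mul ((hlim.const_mul 3).const_sub 1)
    norm_num at h
    norm_num
    refine h.congr fun k => ?_
    rw [hodd]; ring
  · simpa only [hz] using hmain
end

section
/- Let x : ℕ → ℝ be defined by x₀ = 1/2 and x_k = 3x_{k-1}(1 - x_{k-1}) for k ≥ 1. Then lim_{k→∞} k·[(x_{2k+1} - 2/3) - 1/(6·k^{1/2})] = -1/24 and lim_{k→∞} k·[(2/3 - x_{2k}) - 1/(6·k^{1/2})] = 1/24. -/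
open Filter Topology

lemma aux_step (u : ℝ) (h0 : 0 < u) (h1 : u ≤ 1/6) :
    0 < u - 18*u^3 + 27*u^4 ∧ u - 18*u^3 + 27*u^4 ≤ 1/6 ∧
    1/u^2 + 1 ≤ 1/(u - 18*u^3 + 27*u^4)^2 ∧
    |1/(u - 18*u^3 + 27*u^4)^2 + 3/(u - 18*u^3 + 27*u^4) - (1/u^2 + 3/u) - 36| ≤ 5200 * u^2 := by
  obtain ⟨a, ha⟩ : ∃ a, a = 18 - 27*u := ⟨_, rfl⟩
  obtain ⟨q, hq⟩ : ∃ q, q = 1 - u^2*a := ⟨_, rfl⟩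
  have e : u - 18*u^3 + 27*u^4 = u*q := by rw [hq, ha]; ring
  have a1 : 27/2 ≤ a := by linarith
  have a2 : a ≤ 18 := by linarith
  have hu2 : u^2 ≤ 1/36 := by nlinarith
  have hu2' : 0 < u^2 := by positivity
  have q1 : 1/2 ≤ q := by nlinarith
  have q2 : q ≤ 1 := by nlinarith
  have hq0 : 0 < q := by linarith
  rw [e]
  refine ⟨by positivity, by nlinarith, ?_, ?_⟩
  · have : 1/(u*q)^2 - (1/u^2+1) = (a*(1+q) - q^2)/q^2 := by
      field_simp
      have : u^2*a = 1 - q := by linarith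
      linear_combination (-(1+q)) * this
    have h2 : 0 ≤ (a*(1+q) - q^2)/q^2 := by
      apply div_nonneg _ (by positivity)
      nlinarith
    linarith
  · have : 1/(u*q)^2 + 3/(u*q) - (1/u^2 + 3/u) - 36
        = ((-a^2-81-3*u*a^2+72*a-36*u^2*a^2)/q^2) * u^2 := by
      field_simp
      rw [hq, ha]; ring
    rw [this, abs_mul, abs_of_pos hu2']
    apply mul_le_mul_of_nonneg_right _ hu2'.le
    rw [abs_div, abs_of_pos (by positivity : 0 < q^2), div_le_iff₀ (by positivity)]
    have hq4 : 1/4 ≤ q^2 := by nlinarith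
    have ha3 : a^2 ≤ 324 := by nlinarith
    have ha4 : 0 ≤ a^2 := by positivity
    have b1 : u*a^2 ≤ 54 := by nlinarith
    have b2 : u^2*a^2 ≤ 9 := by nlinarith
    have b3 : 0 ≤ u*a^2 := by positivity
    have b4 : 0 ≤ u^2*a^2 := by positivity
    rw [abs_le]; constructor <;> nlinarith

lemma aux_main (u : ℕ → ℝ) (h0 : u 0 = 1/6)
    (hrec : ∀ k, u (k+1) = u k - 18*(u k)^3 + 27*(u k)^4) :
    Tendsto (fun k : ℕ => (k:ℝ) * (u k - 1/(6*√(k:ℝ)))) atTop (𝓝 (1/24)) ∧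
    Tendsto (fun k : ℕ => (k:ℝ) * (u k)^2) atTop (𝓝 (1/36)) := by
  have hb : ∀ k, 0 < u k ∧ u k ≤ 1/6 := by
    intro k
    induction k with
    | zero => rw [h0]; norm_num
    | succ k ih =>
      rw [hrec]
      have := aux_step _ ih.1 ih.2
      exact ⟨this.1, this.2.1⟩
  have hw : ∀ k : ℕ, (k:ℝ) + 1 ≤ 1/(u k)^2 := by
    intro k
    induction k with
    | zero => rw [h0]; norm_num
    | succ k ih =>
      have := (aux_step _ (hb k).1 (hb k).2).2.2.1
      rw [hrec]; push_cast; linarith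
  have hu2 : ∀ k : ℕ, (u k)^2 ≤ ((k:ℝ)+1)⁻¹ := by
    intro k
    have := hw k
    rw [← one_div, le_div_iff₀ (by positivity)]
    rw [le_div_iff₀ (by have := (hb k).1; positivity)] at this
    linarith
  have hphi : ∀ k : ℕ, |1/(u k)^2 + 3/(u k) - 36*k - 54| ≤ 5200 * (harmonic k : ℝ) := by
    intro k
    induction k with
    | zero => rw [h0]; norm_num
    | succ k ih =>
      have h1 := (aux_step _ (hb k).1 (hb k).2).2.2.2
      rw [← hrec] at h1
      rw [harmonic_succ]
      have h2 := hu2 k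
      push_cast
      rw [abs_le] at *
      constructor <;> linarith [h1.1, h1.2, ih.1, ih.2]
  have hs : Tendsto (fun k : ℕ => √(k:ℝ)) atTop atTop :=
    Real.tendsto_sqrt_atTop.comp tendsto_natCast_atTop_atTop
  have hsinv : Tendsto (fun k : ℕ => (√(k:ℝ))⁻¹) atTop (𝓝 0) := tendsto_inv_atTop_zero.comp hs
  have hlog : Tendsto (fun k : ℕ => Real.log k / √(k:ℝ)) atTop (𝓝 0) := by
    have := (isLittleO_log_rpow_atTop (r := 1/2) (by norm_num)).tendsto_div_nhds_zero
    have := this.comp (tendsto_natCast_atTop_atTop (R := ℝ))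
    simpa [Real.sqrt_eq_rpow, Function.comp_def] using this
  have hz : Tendsto (fun k : ℕ => 1/u k + 3/2 - 6*√(k:ℝ)) atTop (𝓝 0) := by
    have hB : Tendsto (fun k : ℕ => 5200 * (Real.log k / √(k:ℝ)) + 5300 * (√(k:ℝ))⁻¹) atTop (𝓝 0) := by
      simpa using (hlog.const_mul 5200).add (hsinv.const_mul 5300)
    apply squeeze_zero_norm' _ hB
    filter_upwards [eventually_ge_atTop 1] with k hk
    have hk' : (1:ℝ) ≤ k := by exact_mod_cast hk
    have hsp : 0 < √(k:ℝ) := Real.sqrt_pos.2 (by linarith)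
    have hss : √(k:ℝ)^2 = k := Real.sq_sqrt (by linarith)
    have hL : 0 ≤ Real.log k := Real.log_nonneg hk'
    have hh := harmonic_le_one_add_log k
    have hp := hphi k
    have hzp : 0 < 1/u k := by have := (hb k).1; positivity
    have e1 : 1/(u k)^2 + 3/(u k) = (1/u k)^2 + 3*(1/u k) := by ring
    rw [e1] at hp
    generalize 1/u k = z at *
    set s := √(k:ℝ)
    rw [Real.norm_eq_abs]
    have e2 : 5200 * (Real.log k / s) + 5300 * s⁻¹ = (5200 * Real.log k + 5300)/s := by ring
    rw [e2, le_div_iff₀ hsp]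
    have e3 : (z+3/2-6*s)*(z+3/2+6*s) = (z^2+3*z-36*k-54) + (54+9/4) := by
      rw [← hss]; ring
    have h5 : |z+3/2-6*s| * (z+3/2+6*s) ≤ 5200 * Real.log k + 5300 := by
      rw [← abs_of_pos (by positivity : 0 < z+3/2+6*s), ← abs_mul, e3]
      rw [abs_le] at *
      constructor <;> linarith [hp.1, hp.2]
    refine le_trans (mul_le_mul_of_nonneg_left ?_ (abs_nonneg _)) h5
    linarith
  -- z / s → 6
  have hzs : Tendsto (fun k : ℕ => (1/u k) * (√(k:ℝ))⁻¹) atTop (𝓝 6) := by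
    have h := ((hz.sub_const (3/2)).mul hsinv).add_const 6
    have : (0 - 3/2 : ℝ) * 0 + 6 = 6 := by norm_num
    rw [this] at h
    refine h.congr' ?_
    filter_upwards [eventually_ge_atTop 1] with k hk
    have hk' : (1:ℝ) ≤ k := by exact_mod_cast hk
    have hsp : 0 < √(k:ℝ) := Real.sqrt_pos.2 (by linarith)
    have := (hb k).1
    field_simp
    ring
  constructor
  · have h := ((hz.sub_const (3/2)).neg).div (hzs.const_mul 6) (by norm_num)
    have : -(0 - 3/2 : ℝ) / (6*6) = 1/24 := by norm_num
    rw [this] at h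
    refine h.congr' ?_
    filter_upwards [eventually_ge_atTop 1] with k hk
    have hk' : (1:ℝ) ≤ k := by exact_mod_cast hk
    have hsp : 0 < √(k:ℝ) := Real.sqrt_pos.2 (by linarith)
    have hss : (k:ℝ) = √(k:ℝ)^2 := (Real.sq_sqrt (by linarith)).symm
    have := (hb k).1
    simp only [Pi.div_apply]
    generalize √(k:ℝ) = s at *
    rw [hss]
    field_simp
    ring
  · have h := (hzs.pow 2).inv₀ (by norm_num)
    have : ((6:ℝ)^2)⁻¹ = 1/36 := by norm_num
    rw [this] at h
    refine h.congr' ?_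
    filter_upwards [eventually_ge_atTop 1] with k hk
    have hk' : (1:ℝ) ≤ k := by exact_mod_cast hk
    have hsp : 0 < √(k:ℝ) := Real.sqrt_pos.2 (by linarith)
    have hss : (k:ℝ) = √(k:ℝ)^2 := (Real.sq_sqrt (by linarith)).symm
    have := (hb k).1
    generalize √(k:ℝ) = s at *
    rw [hss]
    field_simp

theorem stmt_3 (x : ℕ → ℝ) (h0 : x 0 = 1/2)
    (hrec : ∀ k, x (k + 1) = 3 * x k * (1 - x k)) :
    Tendsto (fun k : ℕ => (k : ℝ) *
        ((x (2*k+1) - 2/3) - 1 / (6 * (k : ℝ)^((1:ℝ)/2)))) atTop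
      (𝓝 (-1/24)) ∧
    Tendsto (fun k : ℕ => (k : ℝ) *
        ((2/3 - x (2*k)) - 1 / (6 * (k : ℝ)^((1:ℝ)/2)))) atTop
      (𝓝 (1/24)) := by
  obtain ⟨h1, h2⟩ := aux_main (fun k => 2/3 - x (2*k)) (by norm_num [h0]) (by
    intro k
    have : 2*(k+1) = 2*k+1+1 := by ring
    simp only [this, hrec]
    ring)
  simp only [← Real.sqrt_eq_rpow]
  refine ⟨?_, h1⟩
  have h := h1.sub (h2.const_mul 3)
  have e : (1/24 - 3*(1/36) : ℝ) = -1/24 := by norm_num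
  rw [e] at h
  refine h.congr ?_
  intro k
  rw [hrec]
  ring
end

section
/- Let h : ℝ → ℝ be defined by h(t) = t - 18t³ - 27t⁴. Then for every x in the closed interval [0, 1/12], one has 1 - 12·h(x) ≥ 0, 3 - 2·√(1 - 12·h(x)) ≥ 0, and (1/6)·(-1 + √(3 - 2·√(1 - 12·h(x)))) = x; that is, the function x ↦ (1/6)·(-1 + √(3 - 2·√(1 - 12x))) is the inverse of h restricted to [0, 1/12]. -/
theorem stmt_5 (h : ℝ → ℝ) (hh : ∀ t, h t = t - 18 * t^3 - 27 * t^4) :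
    ∀ x ∈ Set.Icc (0 : ℝ) (1/12),
      1 - 12 * h x ≥ 0 ∧
      3 - 2 * Real.sqrt (1 - 12 * h x) ≥ 0 ∧
      (1/6) * (-1 + Real.sqrt (3 - 2 * Real.sqrt (1 - 12 * h x))) = x := by
  rintro x ⟨h0, h1⟩
  have e : 1 - 12 * h x = (1 - 6 * x - 18 * x^2)^2 := by rw [hh]; ring
  have p : 0 ≤ 1 - 6 * x - 18 * x^2 := by nlinarith
  have e2 : 3 - 2 * (1 - 6 * x - 18 * x^2) = (1 + 6 * x)^2 := by ring
  rw [e, Real.sqrt_sq p, e2, Real.sqrt_sq (by linarith)]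
  exact ⟨sq_nonneg _, sq_nonneg _, by ring⟩
end

section
/- Let y : ℕ → ℝ be defined by y₀ = 1 and y_k = y_{k-1}/(1 + y_{k-1}·ln(1 + y_{k-1})) for k ≥ 1. Then every y_k is strictly positive, the sequence is strictly decreasing, and y_k converges to 0 as k → ∞. -/
open Filter Topology

theorem stmt_6 (y : ℕ → ℝ) (h0 : y 0 = 1)
    (hrec : ∀ k, y (k + 1) = y k / (1 + y k * Real.log (1 + y k))) :
    (∀ k, 0 < y k) ∧ StrictAnti y ∧ Tendsto y atTop (𝓝 0) := by
  have hlog : ∀ x : ℝ, 0 < x → 0 < Real.log (1 + x) := fun x hx => Real.log_pos (by linarith)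
  have hpos : ∀ k, 0 < y k := by
    intro k
    induction k with
    | zero => rw [h0]; norm_num
    | succ k ih =>
      rw [hrec]
      have := hlog _ ih
      positivity
  have hanti : StrictAnti y := by
    apply strictAnti_nat_of_succ_lt
    intro k
    rw [hrec]
    have h1 := mul_pos (hpos k) (hlog _ (hpos k))
    exact div_lt_self (hpos k) (by linarith)
  refine ⟨hpos, hanti, ?_⟩
  have hbdd : BddBelow (Set.range y) := ⟨0, by rintro _ ⟨k, rfl⟩; exact (hpos k).le⟩
  have hL := tendsto_atTop_ciInf hanti.antitone hbdd
  generalize (⨅ i, y i) = L at hL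
  have hL0 : 0 ≤ L := ge_of_tendsto' hL (fun k => (hpos k).le)
  rcases hL0.eq_or_lt with h | h
  · rw [h]; exact hL
  · exfalso
    have h1 := mul_pos h (hlog L h)
    have hlim : Tendsto (fun k => y k / (1 + y k * Real.log (1 + y k))) atTop
        (𝓝 (L / (1 + L * Real.log (1 + L)))) :=
      hL.div ((hL.mul ((hL.const_add 1).log (by linarith))).const_add 1) (by linarith)
    have h2 : Tendsto (fun k => y (k + 1)) atTop (𝓝 L) := hL.comp (tendsto_add_atTop_nat 1)
    simp only [hrec] at h2
    have h3 := tendsto_nhds_unique h2 hlim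
    have h4 : L / (1 + L * Real.log (1 + L)) < L := div_lt_self h (by linarith)
    linarith
end

section
/- Let y : ℕ → ℝ be defined by y₀ = 1 and y_k = y_{k-1}/(1 + y_{k-1}·ln(1 + y_{k-1})) for k ≥ 1. Then lim_{k→∞} k^{1/2}·y_k = 1/√2. -/
open Filter Topology

theorem stmt_7 (y : ℕ → ℝ) (h0 : y 0 = 1)
    (hrec : ∀ k, y (k + 1) = y k / (1 + y k * Real.log (1 + y k))) :
    Tendsto (fun k : ℕ => (k : ℝ)^((1:ℝ)/2) * y k) atTop
      (𝓝 (1 / Real.sqrt 2)) := by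
  have up : ∀ t : ℝ, 0 < t → Real.log (1 + t) ≤ t := fun t ht => by
    have := Real.log_le_sub_one_of_pos (show 0 < 1 + t by linarith)
    linarith
  have lo : ∀ t : ℝ, 0 < t → t / (1 + t) ≤ Real.log (1 + t) := fun t ht => by
    have := Real.one_sub_inv_le_log_of_pos (show 0 < 1 + t by linarith)
    have e : t / (1 + t) = 1 - (1 + t)⁻¹ := by
      have : 1 + t ≠ 0 := by positivity
      field_simp
      ring
    linarith
  have lpos : ∀ t : ℝ, 0 < t → 0 < Real.log (1 + t) := fun t ht =>
    Real.log_pos (by linarith)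
  have hy : ∀ k, 0 < y k ∧ y k ≤ 1 := by
    intro k
    induction k with
    | zero => simp [h0]
    | succ k ih =>
      obtain ⟨h1, h2⟩ := ih
      have hp := mul_pos h1 (lpos _ h1)
      rw [hrec]
      refine ⟨by positivity, ?_⟩
      rw [div_le_one (by positivity)]
      linarith
  have hinv : ∀ k, (y (k+1))⁻¹ = (y k)⁻¹ + Real.log (1 + y k) := by
    intro k
    have h1 := (hy k).1
    have h2 := mul_pos h1 (lpos _ h1)
    have h3 := h1.ne'
    rw [hrec, inv_div]
    field_simp
  set d : ℕ → ℝ := fun k => 2 * (Real.log (1 + y k) / y k) + Real.log (1 + y k) ^ 2 with hd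
  have hdiff : ∀ k, ((y (k+1))⁻¹)^2 - ((y k)⁻¹)^2 = d k := by
    intro k
    rw [hinv, hd]
    simp only [div_eq_mul_inv]
    ring
  have rlo : ∀ k, 1 / (1 + y k) ≤ Real.log (1 + y k) / y k := by
    intro k
    have h1 := (hy k).1
    rw [le_div_iff₀ h1]
    have := lo _ h1
    rwa [one_div, mul_comm, ← div_eq_mul_inv]
  have rup : ∀ k, Real.log (1 + y k) / y k ≤ 1 := by
    intro k
    have h1 := (hy k).1
    rw [div_le_one h1]
    exact up _ h1
  have hgrow : ∀ k : ℕ, (k : ℝ) + 1 ≤ ((y k)⁻¹)^2 := by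
    intro k
    induction k with
    | zero => simp [h0]
    | succ k ih =>
      have h1 := hdiff k
      have h2 : 1 / 2 ≤ 1 / (1 + y k) :=
        one_div_le_one_div_of_le (by linarith [(hy k).1]) (by linarith [(hy k).2])
      have h3 : 1 ≤ d k := by
        simp only [hd]
        nlinarith [rlo k, sq_nonneg (Real.log (1 + y k))]
      push_cast
      linarith
  have hy2 : Tendsto (fun k => (y k)^2) atTop (𝓝 0) := by
    refine squeeze_zero (fun k => sq_nonneg _) (fun k => ?_) tendsto_one_div_add_atTop_nhds_zero_nat
    rw [one_div, ← inv_inv ((y k)^2), ← inv_pow]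
    exact inv_anti₀ (by positivity) (hgrow k)
  have hy0 : Tendsto y atTop (𝓝 0) := by
    have := hy2.sqrt
    simp only [Real.sqrt_zero] at this
    exact this.congr fun k => Real.sqrt_sq (hy k).1.le
  have h1y : Tendsto (fun k => 1 + y k) atTop (𝓝 1) := by simpa using hy0.const_add 1
  have hr : Tendsto (fun k => Real.log (1 + y k) / y k) atTop (𝓝 1) := by
    refine tendsto_of_tendsto_of_tendsto_of_le_of_le ?_ tendsto_const_nhds rlo rup
    simpa using h1y.inv₀ one_ne_zero
  have hl : Tendsto (fun k => Real.log (1 + y k)) atTop (𝓝 0) := by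
    simpa using h1y.log one_ne_zero
  have hdl : Tendsto d atTop (𝓝 2) := by
    simpa using (hr.const_mul 2).add (hl.pow 2)
  have hc := hdl.cesaro
  have hs : ∀ n, ∑ i ∈ Finset.range n, d i = ((y n)⁻¹)^2 - 1 := by
    intro n
    rw [← Finset.sum_congr rfl (fun i _ => hdiff i), Finset.sum_range_sub (fun i => ((y i)⁻¹)^2)]
    simp [h0]
  have hz : Tendsto (fun n : ℕ => (n:ℝ)⁻¹ * ((y n)⁻¹)^2) atTop (𝓝 2) := by
    have := hc.add (tendsto_inv_atTop_nhds_zero_nat (𝕜 := ℝ))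
    rw [add_zero] at this
    refine this.congr fun n => ?_
    rw [hs]
    ring
  have hf := (hz.inv₀ two_ne_zero).sqrt
  rw [one_div (Real.sqrt 2), ← Real.sqrt_inv]
  refine hf.congr fun n => ?_
  rw [← Real.sqrt_eq_rpow, mul_inv, inv_inv, ← inv_pow, inv_inv, Real.sqrt_mul (by positivity),
    Real.sqrt_sq (hy n).1.le]
end

section
/- Let y : ℕ → ℝ be defined by y₀ = 1 and y_k = y_{k-1}/(1 + y_{k-1}·ln(1 + y_{k-1})) for k ≥ 1. Then lim_{k→∞} k·(y_k - 1/(√2·k^{1/2})) = 1/4. -/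
open Filter Topology

lemma aux_log_upper (x : ℝ) (hx : 0 ≤ x) :
    Real.log (1 + x) ≤ x - x^2/2 + x^3/3 := by
  have hd : ∀ t : ℝ, 0 ≤ t → HasDerivAt (fun t : ℝ => t - t^2/2 + t^3/3 - Real.log (1 + t))
      (t^3/(1+t)) t := by
    intro t ht
    have h1 : HasDerivAt (fun t : ℝ => Real.log (1 + t)) (1/(1+t)) t :=
      ((hasDerivAt_id t).const_add 1).log (by simp; positivity)
    have h2 := (((hasDerivAt_id t).sub ((hasDerivAt_pow 2 t).div_const 2)).add
      ((hasDerivAt_pow 3 t).div_const 3)).sub h1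
    refine h2.congr_deriv ?_
    have : (1 + t) ≠ 0 := by positivity
    field_simp
    push_cast
    ring
  have hm : MonotoneOn (fun t : ℝ => t - t^2/2 + t^3/3 - Real.log (1 + t)) (Set.Ici 0) := by
    apply monotoneOn_of_deriv_nonneg (convex_Ici 0)
    · intro t ht
      exact (hd t ht).continuousAt.continuousWithinAt
    · intro t ht
      rw [interior_Ici] at ht
      exact (hd t (le_of_lt ht)).differentiableAt.differentiableWithinAt
    · intro t ht
      rw [interior_Ici] at ht
      have ht' : 0 < t := ht
      rw [(hd t (le_of_lt ht)).deriv]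
      positivity
  have := hm (Set.mem_Ici.2 le_rfl) (Set.mem_Ici.2 hx) hx
  simp at this
  linarith

lemma aux_step_s8 (z : ℝ) (hz : 1 ≤ z) :
    (z + 1/2)^2 + 2 ≤ (z + Real.log (1 + 1/z) + 1/2)^2 ∧
    (z + Real.log (1 + 1/z) + 1/2)^2 ≤ (z+1/2)^2 + 2 + (3/2) * (1/z)^2 := by
  obtain ⟨x, hx⟩ : ∃ x, x = 1/z := ⟨_, rfl⟩
  have hz0 : 0 < z := by linarith
  have hx0 : 0 < x := by rw [hx]; positivity
  have hx1 : x ≤ 1 := by rw [hx, div_le_one hz0]; exact hz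
  have hzx : z * x = 1 := by rw [hx]; field_simp
  rw [← hx]
  have hl := Real.le_log_one_add_of_nonneg hx0.le
  have hu := aux_log_upper x hx0.le
  have hu2 : Real.log (1+x) ≤ x := by
    have := Real.log_le_sub_one_of_pos (show 0 < 1 + x by linarith)
    linarith
  generalize Real.log (1+x) = L at *
  have hL0 : 0 ≤ L := le_trans (by positivity) hl
  have e : 2*x/(x+2) * (2*z+1) = 2 := by
    have : x + 2 ≠ 0 := by positivity
    field_simp
    nlinarith
  have h1 : 2 ≤ L * (2*z+1) := by
    refine e.ge.trans ?_
    gcongr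
  have h2 : L * (2*z+1) ≤ 2 + x^2/2 := by
    calc L * (2*z+1) ≤ (x - x^2/2 + x^3/3) * (2*z+1) := by gcongr
      _ = 2*(z*x) - x*(z*x) + 2/3*x^2*(z*x) + (x - x^2/2 + x^3/3) := by ring
      _ ≤ _ := by rw [hzx]; nlinarith [mul_nonneg (sq_nonneg x) (sub_nonneg.2 hx1)]
  constructor <;> nlinarith

theorem stmt_8 (y : ℕ → ℝ) (h0 : y 0 = 1)
    (hrec : ∀ k, y (k + 1) = y k / (1 + y k * Real.log (1 + y k))) :
    Tendsto (fun k : ℕ => (k : ℝ) *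
        (y k - 1 / (Real.sqrt 2 * (k : ℝ)^((1:ℝ)/2)))) atTop (𝓝 (1/4)) := by
  obtain ⟨z, hzdef⟩ : ∃ z : ℕ → ℝ, ∀ k, z k = 1 / y k := ⟨fun k => 1 / y k, fun _ => rfl⟩
  have hyz : ∀ k, y k = 1 / z k := fun k => by rw [hzdef]; simp
  have hz0 : z 0 = 1 := by rw [hzdef, h0]; simp
  have key : ∀ k, 1 ≤ z k ∧ z (k+1) = z k + Real.log (1 + 1 / z k) := by
    have st : ∀ k, 1 ≤ z k → z (k+1) = z k + Real.log (1 + 1 / z k) := by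
      intro k hk
      have hk0 : 0 < z k := by linarith
      have hl : 0 ≤ Real.log (1 + 1 / z k) := Real.log_nonneg (by
        have : 0 < 1 / z k := by positivity
        linarith)
      rw [hzdef (k+1), hrec, hyz k]
      generalize Real.log (1 + 1 / z k) = L at *
      have : z k + L ≠ 0 := by positivity
      have : 1 + 1 / z k * L ≠ 0 := by positivity
      field_simp
    intro k
    induction k with
    | zero => exact ⟨hz0.ge, st 0 hz0.ge⟩
    | succ k ih =>
      have : 1 ≤ z (k+1) := by
        rw [ih.2]
        have hk0 : 0 < z k := by linarith [ih.1]
        have hl : 0 ≤ Real.log (1 + 1 / z k) := Real.log_nonneg (by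
          have : 0 < 1 / z k := by positivity
          linarith)
        linarith [ih.1]
      exact ⟨this, st _ this⟩
  have hlow : ∀ k : ℕ, 2 * (k:ℝ) + 9/4 ≤ (z k + 1/2)^2 := by
    intro k
    induction k with
    | zero => rw [hz0]; norm_num
    | succ k ih =>
      have := (aux_step_s8 (z k) (key k).1).1
      rw [(key k).2]; push_cast; linarith
  have hup : ∀ k : ℕ, (z k + 1/2)^2 ≤ 2 * (k:ℝ) + 9/4 + 4 * Real.log (k+1) := by
    intro k
    induction k with
    | zero => rw [hz0]; norm_num
    | succ k ih =>
      have h1 := (aux_step_s8 (z k) (key k).1).2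
      have hk1 := (key k).1
      have hkn : (0:ℝ) ≤ k := Nat.cast_nonneg k
      have h2 : (3/2) * (1 / z k)^2 ≤ 4 * (1 / ((k:ℝ)+2)) := by
        have h3 : 2 * (k:ℝ) + 9/4 ≤ (9/4) * z k ^2 := by nlinarith [hlow k]
        have : 0 < z k := by linarith
        rw [div_pow, one_pow, mul_one_div, mul_one_div, div_le_div_iff₀ (by positivity) (by positivity)]
        nlinarith
      have h4 : 1 / ((k:ℝ)+2) ≤ Real.log ((k:ℝ)+2) - Real.log ((k:ℝ)+1) := by
        rw [← Real.log_div (by positivity) (by positivity)]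
        have := Real.one_sub_inv_le_log_of_pos (show 0 < ((k:ℝ)+2)/((k:ℝ)+1) by positivity)
        refine le_trans (le_of_eq ?_) this
        field_simp
        ring
      rw [(key k).2]; push_cast
      rw [show (k:ℝ) + 1 + 1 = k + 2 by ring]
      linarith
  obtain ⟨s, hs⟩ : ∃ s : ℕ → ℝ, ∀ k : ℕ, s k = Real.sqrt (2 * k) := ⟨_, fun _ => rfl⟩
  have hs2 : ∀ k : ℕ, s k ^ 2 = 2 * k := fun k => by rw [hs]; exact Real.sq_sqrt (by positivity)
  have hst : Tendsto s atTop atTop := by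
    have : s = fun k : ℕ => Real.sqrt (2 * k) := funext hs
    rw [this]
    exact Real.tendsto_sqrt_atTop.comp
      (tendsto_natCast_atTop_atTop.const_mul_atTop (by norm_num : (0:ℝ) < 2))
  have hsinv : Tendsto (fun k => (s k)⁻¹) atTop (𝓝 0) := tendsto_inv_atTop_zero.comp hst
  have hlog : Tendsto (fun k => Real.log (s k) / s k) atTop (𝓝 0) :=
    (Real.isLittleO_log_id_atTop.tendsto_div_nhds_zero).comp hst
  have hd : Tendsto (fun k => z k + 1/2 - s k) atTop (𝓝 0) := by
    have hB : Tendsto (fun k => 9/4 * (s k)⁻¹ + 8 * (Real.log (s k) / s k)) atTop (𝓝 0) := by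
      simpa using (hsinv.const_mul (9/4)).add (hlog.const_mul 8)
    refine tendsto_of_tendsto_of_tendsto_of_le_of_le' tendsto_const_nhds hB ?_ ?_
    · filter_upwards with k
      have := hlow k
      have h1 := (key k).1
      have : s k ≤ z k + 1/2 := by
        apply le_of_sq_le_sq _ (by linarith)
        rw [hs2]; linarith
      linarith
    · filter_upwards [eventually_ge_atTop 1] with k hk
      have hk' : (1:ℝ) ≤ k := by exact_mod_cast hk
      have hsp : 0 < s k := by rw [hs]; positivity
      have hl : Real.log (k+1) ≤ 2 * Real.log (s k) := by
        have : 2 * Real.log (s k) = Real.log (s k ^ 2) := by rw [Real.log_pow]; norm_num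
        rw [this, hs2]
        apply Real.log_le_log (by positivity); linarith
      have h1 := (key k).1
      have h2 := hup k
      have h3 := hlow k
      have h4 : s k ≤ z k + 1/2 := by
        apply le_of_sq_le_sq _ (by linarith)
        rw [hs2]; linarith
      have : 9/4 * (s k)⁻¹ + 8 * (Real.log (s k) / s k) = (9/4 + 8 * Real.log (s k)) / s k := by
        field_simp
      rw [this, le_div_iff₀ hsp]
      nlinarith [hs2 k]
  have hden : Tendsto (fun k => 1 + ((z k + 1/2 - s k) - 1/2) * (s k)⁻¹) atTop (𝓝 1) := by
    simpa using ((hd.sub_const (1/2)).mul hsinv).const_add 1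
  have hfin : Tendsto (fun k => (1/2) * (1/2 - (z k + 1/2 - s k)) /
      (1 + ((z k + 1/2 - s k) - 1/2) * (s k)⁻¹)) atTop (𝓝 (1/4)) := by
    have := ((hd.const_sub (1/2)).const_mul (1/2)).div hden one_ne_zero
    rw [show (1/2 * (1/2 - 0) / 1 : ℝ) = 1/4 by norm_num] at this
    exact this
  refine hfin.congr' ?_
  filter_upwards [eventually_ge_atTop 1] with k hk
  have hk' : (1:ℝ) ≤ k := by exact_mod_cast hk
  have hsp : 0 < s k := by rw [hs]; positivity
  have hzp : 0 < z k := by linarith [(key k).1]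
  have e1 : Real.sqrt 2 * (k : ℝ)^((1:ℝ)/2) = s k := by
    rw [← Real.sqrt_eq_rpow, hs, Real.sqrt_mul (by norm_num)]
  have e2 : (k:ℝ) = s k ^ 2 / 2 := by rw [hs2]; ring
  have e3 : 1 + ((z k + 1/2 - s k) - 1/2) * (s k)⁻¹ = z k / s k := by
    field_simp; ring
  rw [e1, e3, e2, hyz]
  field_simp
  ring
end

section
/- Let x : ℕ → ℝ be defined by x₀ = 1 and x_k = x_{k-1} + ln(1 + 1/x_{k-1}) for k ≥ 1. Then lim_{k→∞} (x_k - √(2k)) = -1/2. -/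
open Filter Topology

lemma aux_lower (x : ℝ) (hx : 1 ≤ x) : 1 / (x + 1/2) ≤ Real.log (1 + 1 / x) := by
  have h := Real.le_log_one_add_of_nonneg (x := 1 / x) (by positivity)
  refine le_trans (le_of_eq ?_) h
  field_simp
  ring

lemma aux_upper (x : ℝ) (hx : 1 ≤ x) :
    Real.log (1 + 1 / x) ≤ (x + 1/2) / (x * (x + 1)) := by
  have hp : 0 < 1 + 1 / x := by positivity
  have h0 : 0 ≤ Real.log (1 + 1 / x) := Real.log_nonneg (by
    have : 0 ≤ 1 / x := by positivity
    linarith)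
  have h := Real.self_le_sinh_iff.2 h0
  rw [Real.sinh_log hp] at h
  refine le_trans h (le_of_eq ?_)
  have : x + 1 ≠ 0 := by positivity
  have : x ≠ 0 := by positivity
  have : 1 + 1 / x = (x + 1) / x := by field_simp
  rw [this]
  field_simp
  ring

lemma step_lower (x L : ℝ) (hx : 1 ≤ x) (hL : 1 / (x + 1/2) ≤ L) :
    (x + 1/2)^2 + 2 ≤ (x + L + 1/2)^2 := by
  rw [div_le_iff₀ (by positivity)] at hL
  nlinarith [sq_nonneg L]

lemma step_upper (x L : ℝ) (hx : 1 ≤ x) (h0 : 0 ≤ L) (hL : L ≤ (x + 1/2) / (x * (x + 1)))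
    (hL2 : L ≤ 1 / x) :
    (x + L + 1/2)^2 ≤ (x + 1/2)^2 + 2 + (3/2) / x^2 := by
  have h1 : 2 * (x + 1/2) * L ≤ 2 + (1/2) / x^2 := by
    calc 2 * (x + 1/2) * L ≤ 2 * (x + 1/2) * ((x + 1/2) / (x * (x + 1))) := by gcongr
      _ = 2 + (1/2) / (x * (x+1)) := by field_simp; ring
      _ ≤ 2 + (1/2) / x^2 := by gcongr; nlinarith
  have h2 : L^2 ≤ 1 / x^2 := by
    calc L^2 ≤ (1/x)^2 := by gcongr
      _ = _ := by ring
  have h3 : (3/2) / x^2 = (1/2) / x^2 + 1 / x^2 := by ring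
  rw [h3]; nlinarith

theorem stmt_10 (x : ℕ → ℝ) (h0 : x 0 = 1)
    (hrec : ∀ k, x (k + 1) = x k + Real.log (1 + 1 / x k)) :
    Tendsto (fun k : ℕ => x k - Real.sqrt (2 * k)) atTop (𝓝 (-1/2)) := by
  have hx : ∀ k, 1 ≤ x k := by
    intro k
    induction k with
    | zero => rw [h0]
    | succ k ih =>
      have h := aux_lower _ ih
      have : 0 ≤ 1 / (x k + 1/2) := by positivity
      rw [hrec]; linarith
  have hlow : ∀ k : ℕ, 2 * (k:ℝ) + 9/4 ≤ (x k + 1/2)^2 := by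
    intro k
    induction k with
    | zero => rw [h0]; norm_num
    | succ k ih =>
      have h := step_lower _ _ (hx k) (aux_lower _ (hx k))
      rw [hrec]; push_cast; linarith
  have hup : ∀ k : ℕ, (x k + 1/2)^2 ≤ 2 * (k:ℝ) + 9/4 + 2 * (harmonic k : ℝ) := by
    intro k
    induction k with
    | zero => rw [h0]; norm_num
    | succ k ih =>
      have hxk := hx k
      have hl := aux_lower _ hxk
      have hpos : 0 ≤ 1 / (x k + 1/2) := by positivity
      have hL2 : Real.log (1 + 1 / x k) ≤ 1 / x k := by
        have := Real.log_le_sub_one_of_pos (x := 1 + 1 / x k) (by positivity)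
        linarith
      have h := step_upper _ _ hxk (hpos.trans hl) (aux_upper _ hxk) hL2
      have h4 : (3/2) / (x k)^2 ≤ 2 * ((k:ℝ)+1)⁻¹ := by
        rw [← div_eq_mul_inv, div_le_div_iff₀ (by positivity) (by positivity)]
        nlinarith [hlow k]
      rw [hrec, harmonic_succ]; push_cast; linarith
  have hlim : Tendsto (fun k : ℕ => (17/4 + 2 * Real.log k) / Real.sqrt k) atTop (𝓝 0) := by
    have h1 : Tendsto (fun y : ℝ => Real.log y / Real.sqrt y) atTop (𝓝 0) := by
      have := (isLittleO_log_rpow_atTop (r := 1/2) (by norm_num)).tendsto_div_nhds_zero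
      simpa only [Real.sqrt_eq_rpow] using this
    have h2 : Tendsto (fun y : ℝ => (17/4) / Real.sqrt y) atTop (𝓝 0) :=
      tendsto_const_nhds.div_atTop Real.tendsto_sqrt_atTop
    have h3 := (h2.add (h1.const_mul 2)).comp (tendsto_natCast_atTop_atTop (R := ℝ))
    simp only [mul_zero, add_zero] at h3
    refine h3.congr fun k => ?_
    simp only [Function.comp]
    ring
  have key : Tendsto (fun k : ℕ => x k + 1/2 - Real.sqrt (2 * k)) atTop (𝓝 0) := by
    refine tendsto_of_tendsto_of_tendsto_of_le_of_le' tendsto_const_nhds hlim ?_ ?_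
    · refine Eventually.of_forall fun k => ?_
      have := hx k
      have : Real.sqrt (2 * k) ≤ x k + 1/2 :=
        Real.sqrt_le_iff.2 ⟨by linarith, by linarith [hlow k]⟩
      simpa using this
    · filter_upwards [eventually_gt_atTop 0] with k hk
      have hk' : (0:ℝ) < k := by exact_mod_cast hk
      have hxk := hx k
      have hs : Real.sqrt (2 * k) ≤ x k + 1/2 :=
        Real.sqrt_le_iff.2 ⟨by linarith, by linarith [hlow k]⟩
      have hsk : Real.sqrt k ≤ Real.sqrt (2 * k) := Real.sqrt_le_sqrt (by linarith)
      have hsq : Real.sqrt (2 * k) ^ 2 = 2 * k := Real.sq_sqrt (by positivity)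
      have hs0 : 0 < Real.sqrt k := Real.sqrt_pos.2 hk'
      have hh := harmonic_le_one_add_log k
      have hu := hup k
      rw [le_div_iff₀ hs0]
      calc (x k + 1/2 - Real.sqrt (2 * k)) * Real.sqrt k
          ≤ (x k + 1/2 - Real.sqrt (2 * k)) * (x k + 1/2 + Real.sqrt (2 * k)) := by
            apply mul_le_mul_of_nonneg_left <;> linarith
        _ = (x k + 1/2)^2 - Real.sqrt (2 * k) ^ 2 := by ring
        _ ≤ _ := by rw [hsq]; linarith
  have := key.sub_const (1/2)
  refine (this.congr fun k => ?_).trans (le_of_eq ?_)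
  · ring
  · norm_num
end

section
/- Let θ be the unique real number with cos θ = θ. Let x : ℕ → ℝ be defined by x₀ = 0 and x_k = cos(x_{k-1}) for k ≥ 1, and set u_k = x_{2k+1} - θ. Then for every k ≥ 0, u_{k+1} < (1 - θ²/2)·u_k, and consequently u_k < (1 - θ²/2)^k · u₀ for all k ≥ 1. -/
lemma cos_diff_lt (a b : ℝ) (ha : 0 < a) (hab : a < b) (hb : b ≤ 1) :
    Real.cos a - Real.cos b < (b - a) * Real.sin ((a + b) / 2) := by
  have h := Real.cos_sub_cos a b
  have h1 : Real.sin ((b - a) / 2) < (b - a) / 2 := Real.sin_lt (by linarith)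
  have h2 : Real.sin ((a - b) / 2) = - Real.sin ((b - a) / 2) := by
    rw [← Real.sin_neg]; congr 1; ring
  have h3 : 0 < Real.sin ((a + b) / 2) :=
    Real.sin_pos_of_pos_of_lt_pi (by linarith) (by linarith [Real.pi_gt_three])
  rw [h, h2]
  nlinarith [mul_lt_mul_of_pos_right h1 h3]

theorem stmt_13 (θ : ℝ) (hθ : Real.cos θ = θ)
    (x : ℕ → ℝ) (h0 : x 0 = 0)
    (hrec : ∀ k, x (k + 1) = Real.cos (x k))
    (u : ℕ → ℝ) (hu : ∀ k, u k = x (2*k+1) - θ) :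
    (∀ k, u (k + 1) < (1 - θ^2/2) * u k) ∧
    ∀ k ≥ 1, u k < (1 - θ^2/2)^k * u 0 := by
  have hpi := Real.pi_gt_three
  have hle : θ ≤ 1 := hθ ▸ Real.cos_le_one θ
  have hge : -1 ≤ θ := hθ ▸ Real.neg_one_le_cos θ
  have hpos : 0 < θ := by
    have := Real.cos_pos_of_mem_Ioo (x := θ) ⟨by linarith, by linarith⟩
    linarith
  have hlt : θ < 1 := by
    have := Real.cos_lt_cos_of_nonneg_of_le_pi (x := 0) (y := θ) le_rfl (by linarith) hpos
    rw [Real.cos_zero] at this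
    linarith
  have step : ∀ y, θ < y → y ≤ 1 → θ < Real.cos (Real.cos y) ∧
      Real.cos (Real.cos y) - θ < (1 - θ^2/2) * (y - θ) := by
    intro y hy hy1
    have hc : 0 < Real.cos y := Real.cos_pos_of_mem_Ioo ⟨by linarith, by linarith⟩
    have hcθ : Real.cos y < θ := by
      have := Real.cos_lt_cos_of_nonneg_of_le_pi (x := θ) (y := y) hpos.le (by linarith) hy
      linarith
    have hcc := Real.cos_lt_cos_of_nonneg_of_le_pi hc.le (by linarith) hcθ
    refine ⟨by linarith, ?_⟩
    have e1 := cos_diff_lt _ _ hc hcθ hle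
    have e2 := cos_diff_lt _ _ hpos hy hy1
    rw [hθ] at e1 e2
    have m : Real.sin ((Real.cos y + θ) / 2) ≤ Real.sin θ :=
      Real.sin_le_sin_of_le_of_le_pi_div_two (by linarith) (by linarith) (by linarith)
    have sp : 0 < Real.sin θ := Real.sin_pos_of_pos_of_lt_pi hpos (by linarith)
    have s1 := Real.sin_sq_add_cos_sq θ
    rw [hθ] at s1
    have s2 := Real.sin_sq_le_one ((θ + y) / 2)
    set s := Real.sin ((θ + y) / 2)
    have b : s * Real.sin θ ≤ 1 - θ^2/2 := by nlinarith [sq_nonneg (s - Real.sin θ)]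
    calc _ < (θ - Real.cos y) * Real.sin ((Real.cos y + θ) / 2) := e1
      _ ≤ (θ - Real.cos y) * Real.sin θ := mul_le_mul_of_nonneg_left m (by linarith)
      _ ≤ ((y - θ) * s) * Real.sin θ := mul_le_mul_of_nonneg_right e2.le sp.le
      _ = (s * Real.sin θ) * (y - θ) := by ring
      _ ≤ _ := mul_le_mul_of_nonneg_right b (by linarith)
  have hx : ∀ k, x (2*(k+1)+1) = Real.cos (Real.cos (x (2*k+1))) := by
    intro k
    rw [← hrec, ← hrec]
    rfl
  have inv : ∀ k, θ < x (2*k+1) ∧ x (2*k+1) ≤ 1 := by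
    intro k
    refine ⟨?_, by rw [hrec]; exact Real.cos_le_one _⟩
    induction k with
    | zero => rw [hrec]; simpa [h0] using hlt
    | succ k ih =>
      rw [hx]
      exact (step _ ih (by rw [hrec]; exact Real.cos_le_one _)).1
  have main : ∀ k, u (k + 1) < (1 - θ^2/2) * u k := by
    intro k
    rw [hu, hu, hx]
    exact (step _ (inv k).1 (inv k).2).2
  refine ⟨main, ?_⟩
  have hq : 0 < 1 - θ^2/2 := by nlinarith
  intro k hk
  induction k, hk using Nat.le_induction with
  | base => simpa using main 0
  | succ k hk ih =>
    calc _ < _ := main k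
      _ < _ := mul_lt_mul_of_pos_left ih hq
      _ = _ := by ring
end

section
/- Let θ be the unique real number with cos θ = θ. Let x : ℕ → ℝ be defined by x₀ = 0 and x_k = cos(x_{k-1}) for k ≥ 1. Then the limits lim_{k→∞} (x_{2k+1} - θ)/(1 - θ²)^k and lim_{k→∞} (θ - x_{2k})/(1 - θ²)^k both exist and are strictly positive real numbers. -/
open Filter Topology

theorem stmt_14 (θ : ℝ) (hθ : Real.cos θ = θ)
    (x : ℕ → ℝ) (h0 : x 0 = 0)
    (hrec : ∀ k, x (k + 1) = Real.cos (x k)) :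
    (∃ L : ℝ, 0 < L ∧
      Tendsto (fun k : ℕ => (x (2*k+1) - θ) / (1 - θ^2)^k) atTop (𝓝 L)) ∧
    (∃ L : ℝ, 0 < L ∧
      Tendsto (fun k : ℕ => (θ - x (2*k)) / (1 - θ^2)^k) atTop (𝓝 L)) := by
  have hpi := Real.pi_gt_three
  have hθ1 : θ ≤ 1 := hθ ▸ Real.cos_le_one θ
  have hθm : -1 ≤ θ := hθ ▸ Real.neg_one_le_cos θ
  have hθ0 : 0 < θ := by
    rw [← hθ]; exact Real.cos_pos_of_mem_Ioo ⟨by linarith, by linarith⟩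
  have hs : 0 < Real.sin θ := Real.sin_pos_of_pos_of_le_one hθ0 hθ1
  have hs2 : 1 - θ^2 = Real.sin θ ^ 2 := by
    have := Real.sin_sq_add_cos_sq θ
    rw [hθ] at this; linarith
  set s := Real.sin θ with hsdef
  have hx : ∀ k, 0 ≤ x k ∧ x k ≤ 1 := by
    intro k
    induction k with
    | zero => simp [h0]
    | succ k ih =>
      rw [hrec]
      exact ⟨Real.cos_nonneg_of_mem_Icc ⟨by linarith, by linarith⟩, Real.cos_le_one _⟩
  have hq0 : 0 ≤ Real.sin 1 := (Real.sin_pos_of_pos_of_le_one one_pos le_rfl).le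
  have hq1 : Real.sin 1 < 1 := Real.sin_lt one_pos
  have hcontr : ∀ k, |x (k+1) - θ| ≤ Real.sin 1 * |x k - θ| := by
    intro k
    obtain ⟨h1, h2⟩ := hx k
    have e1 : x (k+1) - θ = -2 * Real.sin ((x k + θ)/2) * Real.sin ((x k - θ)/2) := by
      rw [hrec, ← Real.cos_sub_cos, hθ]
    have e2 : |Real.sin ((x k + θ)/2)| ≤ Real.sin 1 := by
      rw [abs_of_nonneg (Real.sin_nonneg_of_nonneg_of_le_pi (by linarith) (by linarith))]
      exact Real.sin_le_sin_of_le_of_le_pi_div_two (by linarith) (by linarith) (by linarith)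
    have e3 : |Real.sin ((x k - θ)/2)| ≤ |x k - θ| / 2 := by
      have := Real.abs_sin_le_abs (x := (x k - θ)/2)
      rwa [abs_div, abs_two] at this
    rw [e1, abs_mul, abs_mul, abs_neg, abs_two]
    have := mul_le_mul e2 e3 (abs_nonneg _) hq0
    linarith
  have hgeo : ∀ k, |x k - θ| ≤ Real.sin 1 ^ k := by
    intro k
    induction k with
    | zero => rw [h0, pow_zero, zero_sub, abs_neg, abs_of_pos hθ0]; exact hθ1
    | succ k ih =>
      rw [pow_succ']
      exact (hcontr k).trans (mul_le_mul_of_nonneg_left ih hq0)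
  have hlin : ∀ k, |x (k+1) - θ + s * (x k - θ)| ≤ (x k - θ)^2 := by
    intro k
    obtain ⟨h1, h2⟩ := hx k
    set e := x k - θ with he
    have ee : x (k+1) - θ + s * e = θ * (Real.cos e - 1) + s * (e - Real.sin e) := by
      rw [hrec, show x k = θ + e by rw [he]; ring, Real.cos_add, hθ]; ring
    have hae : |e| ≤ 1 := abs_le.2 ⟨by linarith, by linarith⟩
    have c1 : |Real.cos e - 1| ≤ e^2/2 := by
      have a := Real.one_sub_sq_div_two_le_cos (x := e)
      have b := Real.cos_le_one e
      rw [abs_le]; constructor <;> linarith [sq_nonneg e]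
    have c2 : |e - Real.sin e| ≤ e^2/2 := by
      have a := Real.sin_bound hae
      have h3 : |e|^3 ≤ e^2 := by
        rw [← sq_abs e]; nlinarith [sq_nonneg |e|]
      have h4 : |e|^5 ≤ e^2 := by
        rw [← sq_abs e]; exact pow_le_pow_of_le_one (abs_nonneg _) hae (by norm_num)
      have h5 : |e^3| ≤ e^2 := by rwa [abs_pow]
      rw [abs_le] at a h5 ⊢
      constructor <;> linarith [a.1, a.2, h5.1, h5.2, sq_nonneg e]
    have hs1 : s ≤ 1 := Real.sin_le_one _
    rw [ee]
    refine (abs_add_le _ _).trans ?_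
    rw [abs_mul, abs_mul, abs_of_pos hθ0, abs_of_pos hs]
    have d1 := mul_le_mul hθ1 c1 (abs_nonneg _) zero_le_one
    have d2 := mul_le_mul hs1 c2 (abs_nonneg _) zero_le_one
    linarith
  have hsign : ∀ k, x k - θ ≠ 0 → 0 < -(x (k+1) - θ) / (s * (x k - θ)) := by
    intro k hk
    obtain ⟨h1, h2⟩ := hx k
    rcases lt_or_gt_of_ne hk with h | h
    · have := Real.cos_lt_cos_of_nonneg_of_le_pi h1 (by linarith) (show x k < θ by linarith)
      rw [hθ, ← hrec] at this
      exact div_pos_of_neg_of_neg (by linarith) (mul_neg_of_pos_of_neg hs h)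
    · have := Real.cos_lt_cos_of_nonneg_of_le_pi hθ0.le (by linarith) (show θ < x k by linarith)
      rw [hθ, ← hrec] at this
      exact div_pos (by linarith) (mul_pos hs h)
  let δ : ℕ → ℝ := fun k => -(x (k+1) - θ) / (s * (x k - θ)) - 1
  let y : ℕ → ℝ := fun k => (-1)^(k+1) * (x k - θ) / s^k
  have hstep : ∀ k, x k - θ ≠ 0 → y (k+1) = y k * (1 + δ k) := by
    intro k hk
    simp only [y, δ]
    field_simp
    ring
  have hypos : ∀ k, 0 < y k := by
    intro k
    induction k with
    | zero => simp [y, h0, hθ0]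
    | succ k ih =>
      have hk : x k - θ ≠ 0 := by
        intro h; simp [y, h] at ih
      rw [hstep k hk]
      have := hsign k hk
      refine mul_pos ih ?_
      simp only [δ]; linarith
  have hne : ∀ k, x k - θ ≠ 0 := by
    intro k h
    have := hypos k
    simp [y, h] at this
  have hδ : ∀ k, ‖δ k‖ ≤ s⁻¹ * Real.sin 1 ^ k := by
    intro k
    have hk := hne k
    have e1 : δ k = -((x (k+1) - θ + s * (x k - θ)) / (s * (x k - θ))) := by
      simp only [δ]; field_simp; ring
    rw [e1, norm_neg, Real.norm_eq_abs, abs_div, abs_mul, abs_of_pos hs]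
    have hp : 0 < |x k - θ| := abs_pos.2 hk
    refine le_trans ?_ (mul_le_mul_of_nonneg_left (hgeo k) (inv_pos.2 hs).le)
    rw [div_le_iff₀ (mul_pos hs hp)]
    refine (hlin k).trans (le_of_eq ?_)
    rw [← sq_abs]; field_simp
  have hsum : Summable δ :=
    Summable.of_norm_bounded ((summable_geometric_of_lt_one hq0 hq1).mul_left _) hδ
  have hlog : Summable (fun k => Real.log (1 + δ k)) :=
    Real.summable_log_one_add_of_summable hsum
  have hly : ∀ n, Real.log (y n) = Real.log (y 0) + ∑ k ∈ Finset.range n, Real.log (1 + δ k) := by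
    intro n
    induction n with
    | zero => simp
    | succ n ih =>
      have hd : 0 < 1 + δ n := by
        have := hsign n (hne n)
        simp only [δ]; linarith
      rw [hstep n (hne n), Real.log_mul (hypos n).ne' hd.ne', ih, Finset.sum_range_succ]; ring
  obtain ⟨l, hl⟩ : ∃ l, Tendsto (fun n => Real.log (y n)) atTop (𝓝 l) :=
    ⟨_, (hlog.hasSum.tendsto_sum_nat.const_add (Real.log (y 0))).congr fun n => (hly n).symm⟩
  have hyl : Tendsto y atTop (𝓝 (Real.exp l)) := by
    have := (Real.continuous_exp.tendsto l).comp hl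
    refine this.congr fun n => ?_
    simp [Real.exp_log (hypos n)]
  have t2 : Tendsto (fun k : ℕ => 2 * k) atTop atTop :=
    tendsto_atTop_mono (fun k => by simp only [id]; omega) tendsto_id
  have t1 : Tendsto (fun k : ℕ => 2 * k + 1) atTop atTop :=
    tendsto_atTop_mono (fun k => by simp only [id]; omega) tendsto_id
  rw [hs2]
  refine ⟨⟨s * Real.exp l, mul_pos hs (Real.exp_pos _), ?_⟩, ⟨Real.exp l, Real.exp_pos _, ?_⟩⟩
  · refine ((hyl.comp t1).const_mul s).congr fun k => ?_
    have : (-1:ℝ)^(2*k+1+1) = 1 := Even.neg_one_pow ⟨k+1, by ring⟩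
    simp only [y, Function.comp, this, ← pow_mul, pow_succ s (2*k)]
    field_simp
  · refine (hyl.comp t2).congr fun k => ?_
    have : (-1:ℝ)^(2*k+1) = -1 := Odd.neg_one_pow ⟨k, rfl⟩
    simp only [y, Function.comp, this, ← pow_mul]
    ring
end

section
/- Let θ be the unique real number with cos θ = θ. Let x : ℕ → ℝ be defined by x₀ = 0 and x_k = cos(x_{k-1}) for k ≥ 1. Then lim_{k→∞} (x_{2k+1} - θ)/(θ - x_{2k}) = √(1 - θ²); that is, the limit of (x_{2k+1} - θ)/(1 - θ²)^k equals √(1 - θ²) times the limit of (θ - x_{2k})/(1 - θ²)^k. -/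
open Filter Topology

theorem stmt_15 (θ : ℝ) (hθ : Real.cos θ = θ)
    (x : ℕ → ℝ) (h0 : x 0 = 0)
    (hrec : ∀ k, x (k + 1) = Real.cos (x k)) :
    Tendsto (fun k : ℕ => (x (2*k+1) - θ) / (θ - x (2*k))) atTop
      (𝓝 (Real.sqrt (1 - θ^2))) := by
  have hpi := Real.pi_gt_three
  have ht1 : θ ≤ 1 := hθ ▸ Real.cos_le_one θ
  have htm : -1 ≤ θ := hθ ▸ Real.neg_one_le_cos θ
  have ht0 : 0 < θ := by
    have h : 0 < Real.cos θ := Real.cos_pos_of_mem_Ioo ⟨by linarith, by linarith⟩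
    rwa [hθ] at h
  have hx : ∀ k, 0 ≤ x k ∧ x k ≤ 1 := by
    intro k
    induction k with
    | zero => rw [h0]; norm_num
    | succ k ih =>
      rw [hrec]
      exact ⟨Real.cos_nonneg_of_mem_Icc ⟨by linarith, by linarith⟩, Real.cos_le_one _⟩
  have hne : ∀ k, x k ≠ θ := by
    intro k
    induction k with
    | zero => rw [h0]; exact ht0.ne
    | succ k ih =>
      rw [hrec]
      intro h
      apply ih
      obtain ⟨h1, h2⟩ := hx k
      exact Real.injOn_cos ⟨h1, by linarith⟩ ⟨ht0.le, by linarith⟩ (h.trans hθ.symm)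
  have hs0 : 0 ≤ Real.sin 1 := Real.sin_nonneg_of_nonneg_of_le_pi (by norm_num) (by linarith)
  have hs1 : Real.sin 1 < 1 := Real.sin_lt (by norm_num)
  have hc : ∀ k, |x k - θ| ≤ Real.sin 1 ^ k * |x 0 - θ| := by
    intro k
    induction k with
    | zero => simp
    | succ k ih =>
      obtain ⟨h1, h2⟩ := hx k
      have e : x (k+1) - θ = -2 * Real.sin ((x k + θ)/2) * Real.sin ((x k - θ)/2) := by
        rw [hrec, ← Real.cos_sub_cos, hθ]
      have a1 : 0 ≤ Real.sin ((x k + θ)/2) :=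
        Real.sin_nonneg_of_nonneg_of_le_pi (by linarith) (by linarith)
      have a2 : Real.sin ((x k + θ)/2) ≤ Real.sin 1 :=
        Real.sin_le_sin_of_le_of_le_pi_div_two (by linarith) (by linarith) (by linarith)
      have a3 : |Real.sin ((x k - θ)/2)| ≤ |x k - θ| / 2 := by
        have := Real.abs_sin_le_abs (x := (x k - θ)/2)
        rwa [abs_div, abs_two] at this
      calc |x (k+1) - θ| = 2 * (Real.sin ((x k + θ)/2) * |Real.sin ((x k - θ)/2)|) := by
            rw [e, abs_mul, abs_mul, abs_of_nonneg a1, abs_neg, abs_two]; ring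
        _ ≤ 2 * (Real.sin 1 * (|x k - θ| / 2)) := by gcongr
        _ = Real.sin 1 * |x k - θ| := by ring
        _ ≤ Real.sin 1 * (Real.sin 1 ^ k * |x 0 - θ|) := by gcongr
        _ = _ := by ring
  have hlim : Tendsto x atTop (𝓝 θ) := by
    rw [tendsto_iff_dist_tendsto_zero]
    refine squeeze_zero (fun _ => dist_nonneg) (fun k => ?_)
      (by simpa using (tendsto_pow_atTop_nhds_zero_of_lt_one hs0 hs1).mul_const |x 0 - θ|)
    rw [Real.dist_eq]; exact hc k
  have hlim2 : Tendsto (fun k : ℕ => x (2*k)) atTop (𝓝[≠] θ) := by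
    refine tendsto_nhdsWithin_iff.2 ⟨hlim.comp ?_, Eventually.of_forall fun k => hne _⟩
    exact tendsto_id.const_mul_atTop' (by norm_num)
  have hd := ((hasDerivAt_iff_tendsto_slope.1 (Real.hasDerivAt_cos θ)).comp hlim2).neg
  have hs : Real.sqrt (1 - θ^2) = - - Real.sin θ := by
    rw [neg_neg, Real.sin_eq_sqrt_one_sub_cos_sq ht0.le (by linarith), hθ]
  rw [hs]
  refine hd.congr fun k => ?_
  simp only [Function.comp, slope_def_field]
  rw [hrec, hθ, ← neg_sub (x (2*k)) θ, div_neg]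
end

section
/- Let λ be a real number with 1 < λ < 2, set μ = (λ - 1)/λ, and let x : ℕ → ℝ satisfy x_k = λ·x_{k-1}·(1 - x_{k-1}) for k ≥ 1 with initial value x₀ satisfying μ < x₀ < 1 - μ. Then the sequence x_k is strictly decreasing, satisfies μ < x_k for all k, converges to μ, and the limit lim_{k→∞} (x_k - μ)/(2 - λ)^k exists and is a strictly positive real number. -/
open Filter Topology

theorem aux_e (r : ℝ) (hr0 : 0 < r) (hr1 : r < 1) (e : ℕ → ℝ)
    (he : ∀ k, e (k + 1) = r * e k * (1 - e k)) (h0 : 0 < e 0) (h1 : e 0 < 1) :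
    StrictAnti e ∧ (∀ k, 0 < e k) ∧
    ∃ L : ℝ, 0 < L ∧ Tendsto (fun k : ℕ => e k / r ^ k) atTop (𝓝 L) := by
  have hb : ∀ k, 0 < e k ∧ e k ≤ e 0 := by
    intro k
    induction k with
    | zero => exact ⟨h0, le_rfl⟩
    | succ k ih =>
      obtain ⟨a, b⟩ := ih
      rw [he]
      have h2 : 0 < 1 - e k := by linarith
      refine ⟨by positivity, ?_⟩
      have : r * e k * (1 - e k) ≤ e k := by
        have h3 : r * (1 - e k) ≤ 1 := by nlinarith
        nlinarith
      linarith
  have hanti : StrictAnti e := by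
    apply strictAnti_nat_of_succ_lt
    intro k
    obtain ⟨a, b⟩ := hb k
    rw [he]
    have h3 : r * (1 - e k) < 1 := by nlinarith
    nlinarith
  refine ⟨hanti, fun k => (hb k).1, ?_⟩
  have hy : ∀ k, e (k + 1) / r ^ (k + 1) = e k / r ^ k * (1 - e k) := by
    intro k
    rw [he, pow_succ]
    field_simp
  have hpos : ∀ k, 0 < e k / r ^ k := fun k => div_pos (hb k).1 (pow_pos hr0 k)
  have ha : Antitone (fun k : ℕ => e k / r ^ k) := by
    apply antitone_nat_of_succ_le
    intro k
    rw [hy]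
    nlinarith [hpos k, (hb k).1]
  have hD : 0 < (1 - e 0) * (1 - r) := mul_pos (by linarith) (by linarith)
  have hinv : ∀ k, (e k / r ^ k)⁻¹ ≤ (e 0)⁻¹ + (1 - r ^ k) / ((1 - e 0) * (1 - r)) := by
    intro k
    induction k with
    | zero => simp
    | succ k ih =>
      obtain ⟨a, b⟩ := hb k
      have h2 : 0 < 1 - e k := by linarith
      have h20 : 0 < 1 - e 0 := by linarith
      have h2r : 0 < 1 - r := by linarith
      have hp := pow_pos hr0 k
      have e1 : (e (k + 1) / r ^ (k + 1))⁻¹ = (e k / r ^ k)⁻¹ + r ^ k / (1 - e k) := by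
        rw [hy]
        field_simp
        ring
      have e2 : r ^ k / (1 - e k) ≤ r ^ k / (1 - e 0) := by gcongr
      have e3 : (1 - r ^ (k + 1)) / ((1 - e 0) * (1 - r))
          = (1 - r ^ k) / ((1 - e 0) * (1 - r)) + r ^ k / (1 - e 0) := by
        rw [pow_succ]
        field_simp
        ring
      rw [e1, e3]
      linarith
  set C := (e 0)⁻¹ + 1 / ((1 - e 0) * (1 - r)) with hC
  have hCpos : 0 < C := by positivity
  have hlow : ∀ k, C⁻¹ ≤ e k / r ^ k := by
    intro k
    apply inv_le_of_inv_le₀ (hpos k)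
    refine (hinv k).trans ?_
    have hp := pow_pos hr0 k
    rw [hC]
    gcongr
    linarith
  have ht := tendsto_atTop_ciInf ha ⟨C⁻¹, by rintro _ ⟨k, rfl⟩; exact hlow k⟩
  exact ⟨_, lt_of_lt_of_le (inv_pos.2 hCpos) (le_ciInf hlow), ht⟩

theorem stmt_16 (lam : ℝ) (hlam1 : 1 < lam) (hlam2 : lam < 2)
    (μ : ℝ) (hμ : μ = (lam - 1) / lam)
    (x : ℕ → ℝ) (hrec : ∀ k, x (k + 1) = lam * x k * (1 - x k))
    (hx0 : μ < x 0) (hx0' : x 0 < 1 - μ) :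
    StrictAnti x ∧ (∀ k, μ < x k) ∧ Tendsto x atTop (𝓝 μ) ∧
    ∃ L : ℝ, 0 < L ∧
      Tendsto (fun k : ℕ => (x k - μ) / (2 - lam)^k) atTop (𝓝 L) := by
  have hl : 0 < lam := by linarith
  have hr : 0 < 2 - lam := by linarith
  have hm : lam * μ = lam - 1 := by rw [hμ]; field_simp
  have hc : 0 < lam / (2 - lam) := by positivity
  obtain ⟨h1, h2, L, hL, hT⟩ := aux_e (2 - lam) hr (by linarith)
    (fun k => lam / (2 - lam) * (x k - μ))
    (by
      intro k
      have : x (k + 1) - μ = (x k - μ) * ((2 - lam) - lam * (x k - μ)) := by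
        rw [hrec]
        linear_combination (μ - 2 * x k) * hm
      simp only [this]
      field_simp)
    (mul_pos hc (by linarith))
    (by
      show lam / (2 - lam) * (x 0 - μ) < 1
      rw [div_mul_eq_mul_div, div_lt_one hr]
      nlinarith)
  have hT2 : Tendsto (fun k : ℕ => (x k - μ) / (2 - lam)^k) atTop
      (𝓝 ((lam / (2 - lam))⁻¹ * L)) := by
    refine (hT.const_mul (lam / (2 - lam))⁻¹).congr fun k => ?_
    rw [mul_div_assoc, inv_mul_cancel_left₀ hc.ne']
  refine ⟨?_, ?_, ?_, _, mul_pos (inv_pos.2 hc) hL, hT2⟩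
  · intro a b hab
    have := lt_of_mul_lt_mul_left (h1 hab) hc.le
    linarith
  · intro k
    have := pos_of_mul_pos_right (h2 k) hc.le
    linarith
  · have h3 := (hT2.mul (tendsto_pow_atTop_nhds_zero_of_lt_one hr.le (by linarith))).add_const μ
    rw [mul_zero, zero_add] at h3
    refine h3.congr fun k => ?_
    have := (pow_pos hr k).ne'
    rw [div_mul_cancel₀ _ this]
    ring
end

section
/- Let x : ℕ → ℝ be defined by x₀ = 1/2 and x_k = (5/2)·x_{k-1}·(1 - x_{k-1}) for k ≥ 1 (the logistic map with λ = 5/2, whose fixed point is μ = 3/5). Then lim_{k→∞} (x_{2k+1} - 3/5)/(3/5 - x_{2k}) = 1/2; that is, the limit of (x_{2k+1} - 3/5)/(1/2)^{2k} equals one half of the limit of (3/5 - x_{2k})/(1/2)^{2k}. -/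
open Filter Topology

theorem stmt_19 (x : ℕ → ℝ) (h0 : x 0 = 1/2)
    (hrec : ∀ k, x (k + 1) = (5/2) * x k * (1 - x k)) :
    Tendsto (fun k : ℕ => (x (2*k+1) - 3/5) / (3/5 - x (2*k))) atTop
      (𝓝 (1/2)) := by
  have key : ∀ k, x k - 3/5 ≠ 0 ∧ |x k - 3/5| ≤ 1/10 * (3/4 : ℝ)^k := by
    intro k
    induction k with
    | zero => rw [h0]; norm_num [abs_le]
    | succ k ih =>
      obtain ⟨hne, hb⟩ := ih
      have h1 : (3/4 : ℝ)^k ≤ 1 := pow_le_one₀ (by norm_num) (by norm_num)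
      have h2 : |x k - 3/5| ≤ 1/10 := by linarith
      obtain ⟨h3, h4⟩ := abs_le.mp h2
      have e : x (k+1) - 3/5 = (x k - 3/5) * (1 - 5/2 * x k) := by rw [hrec]; ring
      rw [e]
      refine ⟨mul_ne_zero hne (by intro h; linarith), ?_⟩
      rw [abs_mul, pow_succ, ← mul_assoc]
      exact mul_le_mul hb (abs_le.mpr ⟨by linarith, by linarith⟩) (abs_nonneg _) (by positivity)
  have hlim : Tendsto (fun k => x k - 3/5) atTop (𝓝 0) := by
    refine squeeze_zero_norm (fun k => (key k).2) ?_
    have h := (tendsto_pow_atTop_nhds_zero_of_lt_one (r := (3/4 : ℝ))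
      (by norm_num) (by norm_num)).const_mul (1/10 : ℝ)
    rwa [mul_zero] at h
  have h2 : Tendsto (fun k : ℕ => 2 * k) atTop atTop :=
    tendsto_id.const_mul_atTop' (by norm_num)
  have h3 := ((hlim.comp h2).const_mul (5/2)).const_add (1/2)
  rw [mul_zero, add_zero] at h3
  refine h3.congr fun k => ?_
  have hne : 3/5 - x (2*k) ≠ 0 := fun h => (key (2*k)).1 (by linarith)
  rw [eq_div_iff hne, hrec]
  simp only [Function.comp]
  ring
end
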